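/- arXiv:1611.10192 — 3 statements merged into one kernel-verified Lean document; each statement's English description precedes it below -/
import Mathlib

section
/- Let ν ≥ 0 be an integer and let a, b > 0 with a ≠ b be two zeros of J_ν (i.e. J_ν(a) = J_ν(b) = 0). Then ∫_0^1 r^3 J_ν(a r) J_ν(b r) dr = 4 a b J_{ν+1}(a) J_{ν+1}(b) / (a^2 − b^2)^2. -/
open MeasureTheory

/-- Bessel function of the first kind of integer order `ν`, defined by its
everywhere-convergent power series. -/
noncomputable def besselJ (ν : ℕ) (x : ℝ) : ℝ :=
  ∑' m : ℕ, ((-1 : ℝ) ^ m / ((Nat.factorial m : ℝ) * (Nat.factorial (m + ν) : ℝ)))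
    * (x / 2) ^ (2 * m + ν)

noncomputable def bG (ν : ℕ) (y : ℝ) : ℝ :=
  ∑' m : ℕ, ((-1 : ℝ) ^ m / ((Nat.factorial m : ℝ) * (Nat.factorial (m + ν) : ℝ))) * y ^ m

lemma bG_coef_le (ν m : ℕ) :
    ‖((-1 : ℝ) ^ m / ((Nat.factorial m : ℝ) * (Nat.factorial (m + ν) : ℝ)))‖
      ≤ 1 / (Nat.factorial m : ℝ) := by
  rw [norm_div, norm_pow, norm_neg, norm_one, one_pow, norm_mul, Real.norm_natCast,
    Real.norm_natCast]
  have h1 : (0 : ℝ) < Nat.factorial m := by positivity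
  have h2 : (1 : ℝ) ≤ Nat.factorial (m + ν) := by exact_mod_cast Nat.factorial_pos _
  apply one_div_le_one_div_of_le h1
  nlinarith

lemma bG_summable (ν : ℕ) (y : ℝ) : Summable fun m : ℕ =>
    ((-1 : ℝ) ^ m / ((Nat.factorial m : ℝ) * (Nat.factorial (m + ν) : ℝ))) * y ^ m := by
  refine Summable.of_norm_bounded (Real.summable_pow_div_factorial |y|) fun m => ?_
  rw [norm_mul, norm_pow, Real.norm_eq_abs y]
  calc _ ≤ 1 / (Nat.factorial m : ℝ) * |y| ^ m := by
        gcongr; exact bG_coef_le ν m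
    _ = _ := by ring

lemma bG_hasDerivAt (ν : ℕ) (y : ℝ) : HasDerivAt (bG ν) (-bG (ν + 1) y) y := by
  set R := |y| + 1 with hR
  have hy : y ∈ Metric.ball (0 : ℝ) R := by simp [hR]
  have hu : Summable fun m : ℕ => 1 / (Nat.factorial m : ℝ) * (m * R ^ (m - 1)) := by
    rw [← summable_nat_add_iff 1]
    refine (Real.summable_pow_div_factorial R).congr fun m => ?_
    rw [Nat.factorial_succ]
    push_cast
    field_simp
  have key := hasDerivAt_tsum_of_isPreconnected (𝕜 := ℝ) (t := Metric.ball (0 : ℝ) R)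
    (g := fun (m : ℕ) (z : ℝ) =>
      ((-1 : ℝ) ^ m / ((Nat.factorial m : ℝ) * (Nat.factorial (m + ν) : ℝ))) * z ^ m)
    (g' := fun (m : ℕ) (z : ℝ) =>
      ((-1 : ℝ) ^ m / ((Nat.factorial m : ℝ) * (Nat.factorial (m + ν) : ℝ))) *
        (m * z ^ (m - 1)))
    hu Metric.isOpen_ball (convex_ball _ _).isPreconnected
    (fun m z _ => (hasDerivAt_pow m z).const_mul _)
    (fun m z hz => by
      have hz' : |z| ≤ R := by simpa using (Metric.mem_ball.1 hz).le
      rw [norm_mul, norm_mul, norm_pow, Real.norm_natCast, Real.norm_eq_abs z]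
      gcongr
      exact bG_coef_le ν m)
    hy (bG_summable ν y) hy
  refine HasDerivAt.congr_deriv (f := bG ν) key ?_
  symm
  have hs : Summable fun m : ℕ =>
      ((-1 : ℝ) ^ m / ((Nat.factorial m : ℝ) * (Nat.factorial (m + ν) : ℝ))) *
        (m * y ^ (m - 1)) := by
    refine Summable.of_norm_bounded hu fun m => ?_
    rw [norm_mul, norm_mul, norm_pow, Real.norm_natCast, Real.norm_eq_abs y]
    gcongr
    · exact bG_coef_le ν m
    · simp [hR]
  rw [hs.tsum_eq_zero_add, bG, ← tsum_neg]
  simp only [Nat.cast_zero, zero_mul, mul_zero, zero_add]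
  refine tsum_congr fun m => ?_
  rw [Nat.factorial_succ, show m + 1 + ν = m + (ν + 1) by ring, pow_succ]
  push_cast
  field_simp

lemma bG_rec (ν : ℕ) (y : ℝ) :
    bG ν y = (ν + 1) * bG (ν + 1) y - y * bG (ν + 2) y := by
  have h0 := bG_summable ν y
  have h1 := (bG_summable (ν + 1) y).mul_left ((ν : ℝ) + 1)
  have h2 := (bG_summable (ν + 2) y).mul_left y
  unfold bG
  rw [← tsum_mul_left, ← tsum_mul_left, h0.tsum_eq_zero_add, h1.tsum_eq_zero_add,
    add_sub_assoc, ← Summable.tsum_sub ((summable_nat_add_iff 1).2 h1) h2]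
  congr 1
  · simp [Nat.factorial_succ]
    field_simp
  · refine tsum_congr fun m => ?_
    rw [show m + 1 + (ν + 1) = m + ν + 1 + 1 by ring, show m + 1 + ν = m + ν + 1 by ring,
      show m + (ν + 2) = m + ν + 1 + 1 by ring, Nat.factorial_succ (m + ν + 1),
      Nat.factorial_succ m]
    push_cast
    rw [pow_succ, pow_succ]
    field_simp
    ring

lemma besselJ_eq (ν : ℕ) (x : ℝ) : besselJ ν x = (x / 2) ^ ν * bG ν ((x / 2) ^ 2) := by
  unfold besselJ bG
  rw [← tsum_mul_left]
  refine tsum_congr fun m => ?_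
  rw [pow_add, pow_mul]
  ring

lemma besselJ_hasDerivAt (ν : ℕ) (x : ℝ) (hx : x ≠ 0) :
    HasDerivAt (besselJ ν) (ν / x * besselJ ν x - besselJ (ν + 1) x) x := by
  have e : besselJ ν = fun x => (x / 2) ^ ν * bG ν ((x / 2) ^ 2) :=
    funext (besselJ_eq ν)
  have hd : HasDerivAt (fun x : ℝ => x / 2) (1 / 2) x := (hasDerivAt_id x).div_const 2
  have h1 := hd.pow ν
  have h2 := (bG_hasDerivAt ν ((x / 2) ^ 2)).comp x (hd.pow 2)
  have h3 := h1.mul h2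
  rw [besselJ_eq ν x, besselJ_eq (ν + 1) x, e]
  refine h3.congr_deriv ?_
  simp only [Function.comp, Pi.pow_apply]
  rcases ν with _ | n
  · simp
    ring
  · simp only [Nat.add_sub_cancel, pow_succ]
    push_cast
    field_simp
    ring

lemma besselJ_rec (ν : ℕ) (x : ℝ) (hx : x ≠ 0) :
    besselJ (ν + 2) x = 2 * (ν + 1) / x * besselJ (ν + 1) x - besselJ ν x := by
  rw [besselJ_eq, besselJ_eq, besselJ_eq, bG_rec ν]
  simp only [pow_succ]
  field_simp
  ring

lemma besselJ_hasDerivAt_succ (ν : ℕ) (x : ℝ) (hx : x ≠ 0) :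
    HasDerivAt (besselJ (ν + 1)) (besselJ ν x - (ν + 1) / x * besselJ (ν + 1) x) x := by
  refine (besselJ_hasDerivAt (ν + 1) x hx).congr_deriv ?_
  rw [show ν + 1 + 1 = ν + 2 from rfl, besselJ_rec ν x hx]
  push_cast
  ring

lemma besselJ_continuous (ν : ℕ) : Continuous (besselJ ν) := by
  have e : besselJ ν = fun x => (x / 2) ^ ν * bG ν ((x / 2) ^ 2) :=
    funext (besselJ_eq ν)
  have h : Continuous (bG ν) :=
    continuous_iff_continuousAt.2 fun y => (bG_hasDerivAt ν y).continuousAt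
  rw [e]
  fun_prop

lemma besselJ_scale (ν : ℕ) (a r : ℝ) (ha : a ≠ 0) (hr : r ≠ 0) :
    HasDerivAt (fun r => besselJ ν (a * r))
      (ν / r * besselJ ν (a * r) - a * besselJ (ν + 1) (a * r)) r := by
  have hl : HasDerivAt (fun r : ℝ => a * r) a r := by
    simpa using (hasDerivAt_id r).const_mul a
  refine ((besselJ_hasDerivAt ν (a * r) (mul_ne_zero ha hr)).comp r hl).congr_deriv ?_
  field_simp

lemma besselJ_scale_succ (ν : ℕ) (a r : ℝ) (ha : a ≠ 0) (hr : r ≠ 0) :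
    HasDerivAt (fun r => besselJ (ν + 1) (a * r))
      (a * besselJ ν (a * r) - (ν + 1) / r * besselJ (ν + 1) (a * r)) r := by
  have hl : HasDerivAt (fun r : ℝ => a * r) a r := by
    simpa using (hasDerivAt_id r).const_mul a
  refine ((besselJ_hasDerivAt_succ ν (a * r) (mul_ne_zero ha hr)).comp r hl).congr_deriv ?_
  field_simp

/-- If `a ≠ b` are positive zeros of `J_ν` then
`∫_0^1 r^3 J_ν(ar) J_ν(br) dr = 4ab J_{ν+1}(a) J_{ν+1}(b) / (a² - b²)²`. -/
theorem stmt2 (ν : ℕ) (a b : ℝ) (ha : 0 < a) (hb : 0 < b) (hab : a ≠ b)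
    (hJa : besselJ ν a = 0) (hJb : besselJ ν b = 0) :
    ∫ r in (0 : ℝ)..1, r ^ 3 * besselJ ν (a * r) * besselJ ν (b * r) =
      4 * a * b * besselJ (ν + 1) a * besselJ (ν + 1) b / (a ^ 2 - b ^ 2) ^ 2 := by
  have hd : b ^ 2 - a ^ 2 ≠ 0 := by
    have h1 : b - a ≠ 0 := sub_ne_zero.2 hab.symm
    have h2 : b + a ≠ 0 := by positivity
    rw [sq_sub_sq]
    exact mul_ne_zero h2 h1
  obtain ⟨d, hdd⟩ : ∃ d, d = b ^ 2 - a ^ 2 := ⟨_, rfl⟩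
  rw [← hdd] at hd
  obtain ⟨β, hβ⟩ : ∃ β, β = b / d := ⟨_, rfl⟩
  obtain ⟨γ, hγ⟩ : ∃ γ, γ = -a / d := ⟨_, rfl⟩
  obtain ⟨α, hα⟩ : ∃ α, α = 2 * (a ^ 2 + b ^ 2) / d ^ 2 := ⟨_, rfl⟩
  obtain ⟨δ, hδ⟩ : ∃ δ, δ = 4 * a * b / d ^ 2 := ⟨_, rfl⟩
  obtain ⟨β', hβ'⟩ : ∃ β', β' = (-2 * (ν + 1) * α * b + 2 * ν * δ * a) / d := ⟨_, rfl⟩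
  obtain ⟨γ', hγ'⟩ : ∃ γ', γ' = (-2 * ν * δ * b + 2 * (ν + 1) * α * a) / d := ⟨_, rfl⟩
  have e1 : b * β + a * γ = 1 := by rw [hβ, hγ]; field_simp; rw [hdd]; ring
  have e2 : a * β + b * γ = 0 := by rw [hβ, hγ]; field_simp; ring
  have e3 : 2 * β - b * α + a * δ = 0 := by
    rw [hβ, hα, hδ]; field_simp; rw [hdd]; ring
  have e4 : 2 * γ - a * α + b * δ = 0 := by
    rw [hγ, hα, hδ]; field_simp; rw [hdd]; ring
  have e5 : b * β' + a * γ' = -2 * (ν + 1) * α := by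
    rw [hβ', hγ']; field_simp; rw [hdd]; ring
  have e6 : a * β' + b * γ' = -2 * ν * δ := by
    rw [hβ', hγ']; field_simp; rw [hdd]; ring
  have hcont := fun ν => besselJ_continuous ν
  have hc1 := hcont ν
  have hc2 := hcont (ν + 1)
  have key := intervalIntegral.integral_eq_sub_of_hasDerivAt_of_le (a := (0 : ℝ)) (b := 1)
    (f := fun r => α * r ^ 2 * (besselJ ν (a * r) * besselJ ν (b * r))
      + (β * r ^ 3 + β' * r) * (besselJ ν (a * r) * besselJ (ν + 1) (b * r))
      + (γ * r ^ 3 + γ' * r) * (besselJ (ν + 1) (a * r) * besselJ ν (b * r))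
      + δ * r ^ 2 * (besselJ (ν + 1) (a * r) * besselJ (ν + 1) (b * r)))
    (f' := fun r => r ^ 3 * besselJ ν (a * r) * besselJ ν (b * r))
    zero_le_one (by fun_prop) ?_ (Continuous.intervalIntegrable (by fun_prop) _ _)
  · rw [key]
    simp only [mul_one, hJa, hJb, mul_zero]
    rw [hδ, hdd, show (a ^ 2 - b ^ 2) ^ 2 = (b ^ 2 - a ^ 2) ^ 2 by ring]
    ring
  · intro r hr
    have hr0 : r ≠ 0 := hr.1.ne'
    have hu := besselJ_scale ν a r ha.ne' hr0
    have hv := besselJ_scale ν b r hb.ne' hr0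
    have hp := besselJ_scale_succ ν a r ha.ne' hr0
    have hq := besselJ_scale_succ ν b r hb.ne' hr0
    have p1 := (hasDerivAt_id r)
    have p2 := (hasDerivAt_pow 2 r)
    have p3 := (hasDerivAt_pow 3 r)
    have H := ((((p2.const_mul α).mul (hu.mul hv)).add
      (((p3.const_mul β).add (p1.const_mul β')).mul (hu.mul hq))).add
      (((p3.const_mul γ).add (p1.const_mul γ')).mul (hp.mul hv))).add
      ((p2.const_mul δ).mul (hp.mul hq))
    refine H.congr_deriv ?_
    simp only [Pi.mul_apply, Pi.add_apply, id]
    generalize besselJ ν (a * r) = u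
    generalize besselJ ν (b * r) = v
    generalize besselJ (ν + 1) (a * r) = p
    generalize besselJ (ν + 1) (b * r) = q
    push_cast
    field_simp
    linear_combination (r ^ 3 * u * v) * e1 - r ^ 3 * p * q * e2 + r ^ 2 * u * q * e3
      + r ^ 2 * p * v * e4 + r * u * v * e5 - r * p * q * e6
end

section
/- Let ν ≥ 1 be an integer and let a, b > 0 with a ≠ b be two zeros of J_ν (i.e. J_ν(a) = J_ν(b) = 0). Then ∫_0^1 r^2 J_{ν−1}(a r) J_ν(b r) dr = b J_{ν+1}(a) J_{ν+1}(b) / (a^2 − b^2). -/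
open MeasureTheory

noncomputable def besG (k : ℕ) (y : ℝ) : ℝ :=
  ∑' m : ℕ, ((-1 : ℝ) ^ m / ((Nat.factorial m : ℝ) * (Nat.factorial (m + k) : ℝ))) * y ^ m

theorem besG_abs_le (k m : ℕ) (y : ℝ) :
    ‖((-1 : ℝ) ^ m / ((Nat.factorial m : ℝ) * (Nat.factorial (m + k) : ℝ))) * y ^ m‖
      ≤ |y| ^ m / (Nat.factorial m : ℝ) := by
  have h1 : (1 : ℝ) ≤ (Nat.factorial (m + k) : ℝ) := by
    exact_mod_cast Nat.succ_le_of_lt (Nat.factorial_pos _)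
  have h2 : (0 : ℝ) < (Nat.factorial m : ℝ) := by exact_mod_cast Nat.factorial_pos _
  rw [norm_mul, norm_div, norm_pow, norm_pow, norm_neg, norm_one, one_pow, Real.norm_eq_abs,
    Real.norm_eq_abs, abs_of_pos (by positivity), div_mul_eq_mul_div, one_mul]
  apply div_le_div_of_nonneg_left (by positivity) h2
  nlinarith

theorem besG_summable (k : ℕ) (y : ℝ) :
    Summable fun m : ℕ =>
      ((-1 : ℝ) ^ m / ((Nat.factorial m : ℝ) * (Nat.factorial (m + k) : ℝ))) * y ^ m :=
  Summable.of_norm_bounded (Real.summable_pow_div_factorial |y|) (fun m => besG_abs_le k m y)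

theorem besJ_eq (k : ℕ) (x : ℝ) : besselJ k x = (x / 2) ^ k * besG k ((x / 2) ^ 2) := by
  unfold besselJ besG
  rw [← tsum_mul_left]
  congr 1
  ext m
  rw [pow_add, pow_mul]
  ring

theorem besG_coef (k m : ℕ) (y : ℝ) :
    ((-1 : ℝ) ^ (m + 1) / ((Nat.factorial (m + 1) : ℝ) * (Nat.factorial (m + 1 + k) : ℝ)))
      * (((m + 1 : ℕ) : ℝ) * y ^ m) =
    - (((-1 : ℝ) ^ m / ((Nat.factorial m : ℝ) * (Nat.factorial (m + (k + 1)) : ℝ))) * y ^ m) := by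
  have h2 : (Nat.factorial m : ℝ) ≠ 0 := by exact_mod_cast Nat.factorial_ne_zero _
  have h3 : (Nat.factorial (m + (k + 1)) : ℝ) ≠ 0 := by exact_mod_cast Nat.factorial_ne_zero _
  have h4 : ((m : ℝ) + 1) ≠ 0 := by positivity
  rw [show m + 1 + k = m + (k + 1) by ring, Nat.factorial_succ m]
  push_cast
  field_simp
  ring

theorem besG_hasDerivAt (k : ℕ) (y : ℝ) : HasDerivAt (besG k) (-besG (k + 1) y) y := by
  have key := hasDerivAt_tsum_of_isPreconnected
    (g := fun (m : ℕ) (z : ℝ) =>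
      ((-1 : ℝ) ^ m / ((Nat.factorial m : ℝ) * (Nat.factorial (m + k) : ℝ))) * z ^ m)
    (g' := fun (m : ℕ) (z : ℝ) =>
      ((-1 : ℝ) ^ m / ((Nat.factorial m : ℝ) * (Nat.factorial (m + k) : ℝ)))
        * ((m : ℝ) * z ^ (m - 1)))
    (u := fun m : ℕ => (m : ℝ) * (|y| + 1) ^ (m - 1) / (Nat.factorial m : ℝ))
    (t := Metric.ball (0 : ℝ) (|y| + 1)) (y₀ := y) (y := y) ?_ Metric.isOpen_ball
    (convex_ball _ _).isPreconnected ?_ ?_ ?_ (besG_summable k y) ?_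
  · refine HasDerivAt.congr_deriv (f := besG k) key ?_
    rw [Summable.tsum_eq_zero_add]
    · simp only [Nat.add_sub_cancel, besG_coef, tsum_neg]
      simp [besG]
    · rw [← summable_nat_add_iff 1]
      simp only [Nat.add_sub_cancel, besG_coef]
      exact (besG_summable (k + 1) y).neg
  · rw [← summable_nat_add_iff 1]
    refine (Real.summable_pow_div_factorial (|y| + 1)).congr fun m => ?_
    have h2 : (Nat.factorial m : ℝ) ≠ 0 := by exact_mod_cast Nat.factorial_ne_zero _
    have h4 : ((m : ℝ) + 1) ≠ 0 := by positivity
    rw [Nat.factorial_succ, Nat.add_sub_cancel]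
    push_cast
    field_simp
  · intro m z _
    exact (hasDerivAt_pow m z).const_mul _
  · intro m z hz
    have hz' : |z| ≤ |y| + 1 := by
      have := Metric.mem_ball.1 hz
      rw [Real.dist_eq, sub_zero] at this
      exact this.le
    have h1 : (1 : ℝ) ≤ (Nat.factorial (m + k) : ℝ) := by
      exact_mod_cast Nat.succ_le_of_lt (Nat.factorial_pos _)
    have h2 : (0 : ℝ) < (Nat.factorial m : ℝ) := by exact_mod_cast Nat.factorial_pos _
    rw [norm_mul, norm_div, norm_pow, norm_neg, norm_one, one_pow, Real.norm_eq_abs,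
      Real.norm_eq_abs, abs_of_pos (by positivity), div_mul_eq_mul_div, one_mul, abs_mul, abs_pow,
      abs_of_nonneg (Nat.cast_nonneg m)]
    apply div_le_div₀ (by positivity) _ h2 (by nlinarith)
    gcongr
  · simp only [Metric.mem_ball, Real.dist_eq, sub_zero]; linarith
  · simp only [Metric.mem_ball, Real.dist_eq, sub_zero]; linarith

theorem besG_rec (k : ℕ) (y : ℝ) :
    besG k y + y * besG (k + 2) y = (k + 1) * besG (k + 1) y := by
  have h0 := (besG_summable k y)
  have h1 := (besG_summable (k + 1) y)
  unfold besG
  rw [h0.tsum_eq_zero_add, h1.tsum_eq_zero_add, mul_add, ← tsum_mul_left, ← tsum_mul_left,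
    add_assoc, ← Summable.tsum_add]
  · congr 1
    · have h3 : (Nat.factorial k : ℝ) ≠ 0 := by exact_mod_cast Nat.factorial_ne_zero _
      have h4 : ((k : ℝ) + 1) ≠ 0 := by positivity
      simp only [zero_add, Nat.factorial_succ]
      push_cast
      field_simp
    · congr 1
      ext m
      have h2 : (Nat.factorial m : ℝ) ≠ 0 := by exact_mod_cast Nat.factorial_ne_zero _
      have h3 : (Nat.factorial (m + 1 + k) : ℝ) ≠ 0 := by exact_mod_cast Nat.factorial_ne_zero _
      have h4 : ((m : ℝ) + 1) ≠ 0 := by positivity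
      have h5 : ((m : ℝ) + 1 + k + 1) ≠ 0 := by positivity
      rw [show m + (k + 2) = (m + 1 + k) + 1 by ring, show m + 1 + (k + 1) = (m + 1 + k) + 1 by ring,
        Nat.factorial_succ (m + 1 + k), Nat.factorial_succ m]
      push_cast
      field_simp
      ring
  · exact (summable_nat_add_iff 1).2 h0
  · exact (besG_summable (k + 2) y).mul_left y

theorem besJ_rec (n : ℕ) (x : ℝ) :
    x * (besselJ n x + besselJ (n + 2) x) = 2 * (n + 1) * besselJ (n + 1) x := by
  simp only [besJ_eq]
  have := besG_rec n ((x / 2) ^ 2)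
  linear_combination (x * (x / 2) ^ n) * this

theorem besJ_deriv0 (n : ℕ) (x : ℝ) : HasDerivAt (besselJ n)
    ((n : ℝ) * (x / 2) ^ (n - 1) * (1 / 2) * besG n ((x / 2) ^ 2)
      + (x / 2) ^ n * (-besG (n + 1) ((x / 2) ^ 2) * (x / 2))) x := by
  have hh : HasDerivAt (fun t : ℝ => t / 2) (1 / 2) x := (hasDerivAt_id x).div_const 2
  have h2 : HasDerivAt (fun t : ℝ => (t / 2) ^ 2) (x / 2) x := by
    refine HasDerivAt.congr_deriv (hh.pow 2) ?_
    norm_num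
    try ring
  have h3 := (besG_hasDerivAt n ((x / 2) ^ 2)).comp x h2
  have h4 := (hh.pow n).mul h3
  have e : besselJ n = fun t => (t / 2) ^ n * besG n ((t / 2) ^ 2) := funext (besJ_eq n)
  rw [e]
  exact h4

theorem besJ_continuous (n : ℕ) : Continuous (besselJ n) :=
  continuous_iff_continuousAt.2 fun x => (besJ_deriv0 n x).continuousAt

theorem besJ_deriv1 (n : ℕ) (x : ℝ) (hx : x ≠ 0) :
    HasDerivAt (besselJ n) (n / x * besselJ n x - besselJ (n + 1) x) x := by
  refine (besJ_deriv0 n x).congr_deriv ?_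
  symm
  simp only [besJ_eq]
  rcases n with _ | n
  · simp
    ring
  · simp only [Nat.add_sub_cancel]
    field_simp
    ring

theorem besJ_deriv2 (n : ℕ) (x : ℝ) (hx : x ≠ 0) :
    HasDerivAt (besselJ (n + 1)) (besselJ n x - (n + 1) / x * besselJ (n + 1) x) x := by
  refine (besJ_deriv1 (n + 1) x hx).congr_deriv ?_
  symm
  have := besJ_rec n x
  push_cast
  field_simp
  linear_combination this

/-- If `ν ≥ 1` and `a ≠ b` are positive zeros of `J_ν` then
`∫_0^1 r² J_{ν-1}(ar) J_ν(br) dr = b J_{ν+1}(a) J_{ν+1}(b) / (a² - b²)`. -/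
theorem stmt4 (ν : ℕ) (hν : 1 ≤ ν) (a b : ℝ) (ha : 0 < a) (hb : 0 < b)
    (hab : a ≠ b) (hJa : besselJ ν a = 0) (hJb : besselJ ν b = 0) :
    ∫ r in (0 : ℝ)..1, r ^ 2 * besselJ (ν - 1) (a * r) * besselJ ν (b * r) =
      b * besselJ (ν + 1) a * besselJ (ν + 1) b / (a ^ 2 - b ^ 2) := by
  obtain ⟨n, rfl⟩ : ∃ n, ν = n + 1 := ⟨ν - 1, by omega⟩
  rw [Nat.add_sub_cancel]
  have hD : a ^ 2 - b ^ 2 ≠ 0 := by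
    intro h
    have : (a - b) * (a + b) = 0 := by linear_combination h
    rcases mul_eq_zero.1 this with h | h
    · exact hab (by linarith)
    · linarith
  have hc0 := besJ_continuous n
  have hc1 := besJ_continuous (n + 1)
  rw [intervalIntegral.integral_eq_sub_of_hasDerivAt_of_le (f := fun r =>
    (a * (r ^ 2 * (besselJ (n + 1) (a * r) * besselJ (n + 1) (b * r)))
      + b * (r ^ 2 * (besselJ n (a * r) * besselJ n (b * r)))
      + (2 * n * a * b - 2 * (n + 1) * b * a) / (a ^ 2 - b ^ 2)
          * (r * (besselJ (n + 1) (a * r) * besselJ n (b * r)))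
      + (2 * (n + 1) * b * b - 2 * n * a * a) / (a ^ 2 - b ^ 2)
          * (r * (besselJ n (a * r) * besselJ (n + 1) (b * r)))) / (a ^ 2 - b ^ 2))
    zero_le_one]
  · have ra : besselJ (n + 1 + 1) a = - besselJ n a := by
      have := besJ_rec n a
      rw [hJa, mul_zero] at this
      have := (mul_eq_zero.1 this).resolve_left ha.ne'
      linarith
    have rb : besselJ (n + 1 + 1) b = - besselJ n b := by
      have := besJ_rec n b
      rw [hJb, mul_zero] at this
      have := (mul_eq_zero.1 this).resolve_left hb.ne'
      linarith
    simp only [mul_one, hJa, hJb, ra, rb]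
    ring
  · apply Continuous.continuousOn
    fun_prop
  · intro r hr
    have hr0 : r ≠ 0 := hr.1.ne'
    have la : HasDerivAt (fun r : ℝ => a * r) a r := by
      simpa using (hasDerivAt_id r).const_mul a
    have lb : HasDerivAt (fun r : ℝ => b * r) b r := by
      simpa using (hasDerivAt_id r).const_mul b
    have har : a * r ≠ 0 := mul_ne_zero ha.ne' hr0
    have hbr : b * r ≠ 0 := mul_ne_zero hb.ne' hr0
    have dP := (besJ_deriv1 n (a * r) har).comp r la
    have dQ := (besJ_deriv1 n (b * r) hbr).comp r lb
    have du := (besJ_deriv2 n (a * r) har).comp r la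
    have dv := (besJ_deriv2 n (b * r) hbr).comp r lb
    have d2 := hasDerivAt_pow 2 r
    have d1 := hasDerivAt_id r
    have := (((((d2.mul (du.mul dv)).const_mul a).add ((d2.mul (dP.mul dQ)).const_mul b)).add
      ((d1.mul (du.mul dQ)).const_mul
        ((2 * n * a * b - 2 * (n + 1) * b * a) / (a ^ 2 - b ^ 2)))).add
      ((d1.mul (dP.mul dv)).const_mul
        ((2 * (n + 1) * b * b - 2 * n * a * a) / (a ^ 2 - b ^ 2)))).div_const (a ^ 2 - b ^ 2)
    refine HasDerivAt.congr_deriv this ?_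
    simp only [Function.comp, id, Pi.mul_apply]
    generalize besselJ n (a * r) = P
    generalize besselJ n (b * r) = Q
    generalize besselJ (n + 1) (a * r) = u
    generalize besselJ (n + 1) (b * r) = v
    have ha' := ha.ne'
    have hb' := hb.ne'
    push_cast
    field_simp
    ring
  · apply Continuous.intervalIntegrable
    fun_prop
end

section
/- Let (j_{0,k})_{k ≥ 1} denote the strictly increasing enumeration of the positive zeros of J_0, let (ω_k)_{k ≥ 1} be the strictly increasing enumeration of the set {j_{0,n}^2 − j_{0,p}^2 : p ∈ {1, 2, 3}, n ≥ p + 1}, and set ω_0 := 0 and ω_{−k} := −ω_k for k ≥ 1. Then for every T > 0 the family {t ↦ e^{i ω_n t} : n ∈ ℤ} is minimal in L^2((0,T); ℂ): for every m ∈ ℤ, the function t ↦ e^{i ω_m t} does not belong to the closure in L^2((0,T); ℂ) of the linear span of {t ↦ e^{i ω_n t} : n ∈ ℤ, n ≠ m}. -/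
open MeasureTheory Complex

lemma op_le (f : ℝ → ℂ) (hf : Continuous f) (h L : ℝ) (hh : 0 ≤ h) (hL : 0 ≤ L) (u : ℂ) (hu : ‖u‖ = 1) :
    ∫ t in (0:ℝ)..L, ‖(f (t + h) - u * f t) / 2‖ ^ 2 ≤ ∫ t in (0:ℝ)..(L + h), ‖f t‖ ^ 2 := by
  have hc : Continuous fun t => ‖f t‖ ^ 2 := by fun_prop
  have h1 : ∫ t in (0:ℝ)..L, ‖(f (t + h) - u * f t) / 2‖ ^ 2 ≤
      ∫ t in (0:ℝ)..L, (‖f (t+h)‖ ^ 2 / 2 + ‖f t‖ ^ 2 / 2) := by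
    apply intervalIntegral.integral_mono_on hL
    · apply Continuous.intervalIntegrable; fun_prop
    · apply Continuous.intervalIntegrable; fun_prop
    · intro t _
      have := norm_sub_le (f (t+h)) (u * f t)
      rw [norm_mul, hu, one_mul] at this
      rw [norm_div, div_pow]
      have h0 := norm_nonneg (f (t+h) - u * f t)
      have h2 : ‖(2:ℂ)‖ = 2 := by norm_num
      rw [h2]
      nlinarith [sq_nonneg (‖f (t+h)‖ - ‖f t‖)]
  have h2 : ∫ t in (0:ℝ)..L, (‖f (t+h)‖ ^ 2 / 2 + ‖f t‖ ^ 2 / 2) =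
     (∫ t in h..(L+h), ‖f t‖ ^ 2) / 2 + (∫ t in (0:ℝ)..L, ‖f t‖ ^ 2) / 2 := by
    rw [intervalIntegral.integral_add]
    · rw [intervalIntegral.integral_div, intervalIntegral.integral_div]
      rw [intervalIntegral.integral_comp_add_right (fun t => ‖f t‖ ^ 2) h, zero_add]
    · apply Continuous.intervalIntegrable; fun_prop
    · apply Continuous.intervalIntegrable; fun_prop
  have ii : ∀ a b, IntervalIntegrable (fun t => ‖f t‖ ^ 2) volume a b := fun a b => hc.intervalIntegrable a b
  have h3 := intervalIntegral.integral_add_adjacent_intervals (ii 0 h) (ii h (L+h))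
  have h4 := intervalIntegral.integral_add_adjacent_intervals (ii 0 L) (ii L (L+h))
  have h5 : 0 ≤ ∫ t in (0:ℝ)..h, ‖f t‖ ^ 2 := intervalIntegral.integral_nonneg hh (fun _ _ => by positivity)
  have h6 : 0 ≤ ∫ t in L..(L+h), ‖f t‖ ^ 2 := intervalIntegral.integral_nonneg (by linarith) (fun _ _ => by positivity)
  linarith

lemma ind (l h : ℤ → ℝ) (m : ℤ) (hh : ∀ n, 0 ≤ h n) (S : Finset ℤ) :
    m ∉ S → ∀ (b : ℂ) (c : ℤ → ℂ) (L : ℝ), 0 ≤ L →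
    ‖b‖ ^ 2 * (∏ n ∈ S, ‖(exp (I * l m * h n) - exp (I * l n * h n)) / 2‖) ^ 2 * L ≤
      ∫ t in (0:ℝ)..(L + ∑ n ∈ S, h n),
        ‖b * exp (I * l m * t) + ∑ n ∈ S, c n * exp (I * l n * t)‖ ^ 2 := by
  induction S using Finset.induction_on with
  | empty =>
    intro _ b c L hL
    have : ∀ t : ℝ, ‖exp (I * l m * t)‖ = 1 := fun t => by
      rw [show I * (l m : ℂ) * t = ((l m * t : ℝ) : ℂ) * I by push_cast; ring, norm_exp_ofReal_mul_I]
    simp [this]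
    rw [mul_comm]
  | insert a S ha ih =>
    intro hm b c L hL
    simp only [Finset.mem_insert, not_or] at hm
    have hSn : 0 ≤ ∑ n ∈ S, h n := Finset.sum_nonneg fun n _ => hh n
    have := ih hm.2 (b * ((exp (I * l m * h a) - exp (I * l a * h a)) / 2))
      (fun n => c n * ((exp (I * l n * h a) - exp (I * l a * h a)) / 2)) L hL
    have hu : ‖exp (I * l a * h a)‖ = 1 := by
      rw [show I * (l a : ℂ) * h a = ((l a * h a : ℝ) : ℂ) * I by push_cast; ring, norm_exp_ofReal_mul_I]
    have key := op_le (fun t : ℝ => b * exp (I * l m * t) + ∑ n ∈ insert a S, c n * exp (I * l n * t))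
      (by fun_prop) (h a) (L + ∑ n ∈ S, h n) (hh a) (by linarith) _ hu
    rw [Finset.prod_insert ha, Finset.sum_insert ha]
    rw [show L + (h a + ∑ n ∈ S, h n) = L + ∑ n ∈ S, h n + h a by ring]
    refine le_trans (le_trans (le_of_eq ?_) this) (le_trans (le_of_eq ?_) key)
    · rw [norm_mul]; ring
    · congr 1; ext t; congr 2
      rw [Finset.sum_insert ha, Finset.sum_insert ha]
      have e : ∀ n, exp (I * l n * ((t + h a : ℝ) : ℂ)) = exp (I * l n * t) * exp (I * l n * h a) := fun n => by
        rw [← exp_add]; congr 1; push_cast; ring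
      simp only [e]
      have : ∑ n ∈ S, c n * ((exp (I * l n * h a) - exp (I * l a * h a)) / 2) * exp (I * l n * t)
        = (∑ n ∈ S, c n * (exp (I * l n * t) * exp (I * l n * h a)) - exp (I * l a * h a) * ∑ n ∈ S, c n * exp (I * l n * t)) / 2 := by
        rw [Finset.mul_sum, ← Finset.sum_sub_distrib, Finset.sum_div]
        apply Finset.sum_congr rfl; intros; ring
      rw [this]; ring

lemma s_le (x y : ℝ) (h : ℝ) : ‖(exp (I * x * h) - exp (I * y * h)) / 2‖ ≤ 1 := by
  have e : ∀ x : ℝ, ‖exp (I * x * h)‖ = 1 := fun x => by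
    rw [show I * (x : ℂ) * h = ((x * h : ℝ) : ℂ) * I by push_cast; ring, norm_exp_ofReal_mul_I]
  have := norm_sub_le (exp (I * x * h)) (exp (I * y * h))
  rw [e, e] at this
  rw [norm_div]; norm_num; linarith

lemma s_eq (x y : ℝ) (hxy : y ≠ x) : ‖(exp (I * x * (Real.pi / |y - x| : ℝ)) - exp (I * y * (Real.pi / |y - x| : ℝ))) / 2‖ = 1 := by
  have hd : y - x ≠ 0 := sub_ne_zero.2 hxy
  set h := Real.pi / |y - x| with hh
  have e : ∀ x : ℝ, ‖exp (I * x * h)‖ = 1 := fun x => by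
    rw [show I * (x : ℂ) * h = ((x * h : ℝ) : ℂ) * I by push_cast; ring, norm_exp_ofReal_mul_I]
  have : exp (I * y * h) = - exp (I * x * h) := by
    rw [show I * (y:ℂ) * h = I * x * h + ((y - x) * h : ℝ) * I by push_cast; ring, exp_add]
    rcases lt_or_gt_of_ne hd with h1 | h1
    · have : (y - x) * h = - Real.pi := by rw [hh, abs_of_neg h1]; field_simp
      rw [this]; push_cast; rw [neg_mul, exp_neg, exp_pi_mul_I]; norm_num
    · have : (y - x) * h = Real.pi := by rw [hh, abs_of_pos h1]; field_simp
      rw [this, exp_pi_mul_I]; norm_num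
  rw [this, sub_neg_eq_add, ← two_mul, mul_div_cancel_left₀ _ two_ne_zero, e]

lemma s_pos (x y : ℝ) (hxy : y ≠ x) (h : ℝ) (h0 : 0 < h) (h1 : h ≤ Real.pi / |y - x|) :
    0 < ‖(exp (I * x * h) - exp (I * y * h)) / 2‖ := by
  have hd : 0 < |y - x| := abs_pos.2 (sub_ne_zero.2 hxy)
  rw [norm_pos_iff]
  intro H
  have H : exp (I * x * h) = exp (I * y * h) := by
    rw [div_eq_zero_iff] at H; simpa [sub_eq_zero] using H
  obtain ⟨n, hn⟩ := exp_eq_exp_iff_exists_int.1 H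
  have hn' : (y - x) * h = - n * (2 * Real.pi) := by
    have := congrArg Complex.im hn
    simp at this; linarith
  rw [le_div_iff₀ hd] at h1
  have h2 : |y - x| * h = |(n:ℝ)| * (2 * Real.pi) := by
    have := congrArg abs hn'
    rwa [abs_mul, abs_mul, abs_of_pos h0, abs_of_pos Real.two_pi_pos, abs_neg] at this
  have hn0 : n ≠ 0 := by
    rintro rfl
    simp at h2; rcases h2 with h2 | h2
    · exact hxy (by linarith)
    · linarith
  have : (1:ℝ) ≤ |(n:ℝ)| := by exact_mod_cast Int.one_le_abs hn0
  nlinarith [Real.pi_pos]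

lemma minimal (l : ℤ → ℝ) (m : ℤ) (hs : Summable fun n => 1 / |l n - l m|)
    (hne : ∀ n, n ≠ m → l n ≠ l m) (T : ℝ) (hT : 0 < T) :
    ∃ ε : ℝ, 0 < ε ∧
      ∀ c : ℤ → ℂ, (Function.support c).Finite → c m = 0 →
        ε ≤ ∫ t in (0 : ℝ)..T,
          ‖Complex.exp (Complex.I * (l m : ℂ) * (t : ℂ)) -
            ∑' n : ℤ, c n * Complex.exp (Complex.I * (l n : ℂ) * (t : ℂ))‖ ^ 2 := by
  classical
  have hs' : Summable fun n => Real.pi / |l n - l m| := by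
    simpa [div_eq_mul_inv] using hs.mul_left Real.pi
  obtain ⟨F, hF⟩ := summable_iff_vanishing.1 hs' (Set.Iio (T/4)) (Iio_mem_nhds (by positivity))
  set h : ℤ → ℝ := fun n => if n ∈ F then min (Real.pi / |l n - l m|) (T / (4 * (F.card + 1))) else Real.pi / |l n - l m| with hh
  have hp : ∀ n, 0 ≤ Real.pi / |l n - l m| := fun n => by positivity
  have hn : ∀ n, 0 ≤ h n := by
    intro n; simp only [hh]; split_ifs
    · exact le_min (hp n) (by positivity)
    · exact hp n
  have hpos : ∀ n, n ≠ m → 0 < h n := by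
    intro n hnm
    have : 0 < Real.pi / |l n - l m| := div_pos Real.pi_pos (abs_pos.2 (sub_ne_zero.2 (hne n hnm)))
    simp only [hh]; split_ifs
    · exact lt_min this (by positivity)
    · exact this
  have hle : ∀ n, h n ≤ Real.pi / |l n - l m| := by
    intro n; simp only [hh]; split_ifs
    · exact min_le_left _ _
    · exact le_rfl
  have hsum : ∀ S : Finset ℤ, ∑ n ∈ S, h n ≤ T / 2 := by
    intro S
    rw [← Finset.sum_inter_add_sum_sdiff S F]
    have a1 : ∑ n ∈ S \ F, h n ≤ T / 4 := by
      have := hF (S \ F) Finset.sdiff_disjoint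
      exact (Finset.sum_le_sum fun n _ => hle n).trans (le_of_lt this)
    have a2 : ∑ n ∈ S ∩ F, h n ≤ T / 4 := by
      calc ∑ n ∈ S ∩ F, h n ≤ ∑ n ∈ F, h n := Finset.sum_le_sum_of_subset_of_nonneg Finset.inter_subset_right (fun n _ _ => hn n)
        _ ≤ ∑ n ∈ F, T / (4 * (F.card + 1)) := Finset.sum_le_sum fun n hnF => by simp [hh, hnF]
        _ ≤ T / 4 := by
          rw [Finset.sum_const, nsmul_eq_mul, mul_div_assoc', div_le_div_iff₀ (by positivity) (by positivity)]
          nlinarith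
    linarith
  set s : ℤ → ℝ := fun n => ‖(exp (I * l m * h n) - exp (I * l n * h n)) / 2‖ with hsdef
  have s1 : ∀ n, s n ≤ 1 := fun n => s_le _ _ _
  have s0 : ∀ n, 0 ≤ s n := fun n => norm_nonneg _
  have sp : ∀ n, n ≠ m → 0 < s n := fun n hnm => s_pos _ _ (hne n hnm) _ (hpos n hnm) (hle n)
  have se : ∀ n, n ≠ m → n ∉ F → s n = 1 := fun n hnm hnF => by
    have : h n = Real.pi / |l n - l m| := by simp [hh, hnF]
    simp only [hsdef, this]
    exact s_eq _ _ (hne n hnm)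
  set P := ∏ n ∈ F.erase m, s n with hP
  have hPpos : 0 < P := Finset.prod_pos fun n hn => sp n (Finset.ne_of_mem_erase hn)
  refine ⟨P ^ 2 * (T / 2), by positivity, ?_⟩
  intro c hc hcm
  set S := hc.toFinset with hS
  have hmS : m ∉ S := by simp [hS, hcm]
  have hPS : P ≤ ∏ n ∈ S, s n := by
    have : ∏ n ∈ S, s n = ∏ n ∈ S ∩ F.erase m, s n := by
      symm; apply Finset.prod_subset Finset.inter_subset_left
      intro n hnS hn2
      have hnm : n ≠ m := fun h => hmS (h ▸ hnS)
      apply se n hnm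
      intro hnF; exact hn2 (by simp [hnS, hnm, hnF])
    rw [this, hP]
    rw [← Finset.prod_sdiff (Finset.inter_subset_right : S ∩ F.erase m ⊆ F.erase m)]
    exact mul_le_of_le_one_left (Finset.prod_nonneg fun n _ => s0 n) (Finset.prod_le_one (fun n _ => s0 n) fun n _ => s1 n)
  have := ind l h m hn S hmS 1 (fun n => - c n) (T - ∑ n ∈ S, h n) (by linarith [hsum S])
  rw [sub_add_cancel] at this
  refine le_trans ?_ (this.trans (le_of_eq ?_))
  · have h2 := hsum S
    simp only [norm_one, one_pow, one_mul]
    gcongr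
    linarith
  · congr 1; ext t; congr 2
    rw [tsum_eq_sum (s := S)]
    · simp [sub_eq_add_neg]
    · intro n hn; 
      have : c n = 0 := by simpa [hS] using hn
      simp [this]

noncomputable def egf (a : ℕ → ℝ) (y : ℝ) : ℝ := ∑' m : ℕ, a m * (y ^ m / (Nat.factorial m : ℝ))

lemma egf_summable (a : ℕ → ℝ) (ha : ∀ m, |a m| ≤ 1) (y : ℝ) :
    Summable fun m => a m * (y ^ m / (Nat.factorial m : ℝ)) := by
  refine Summable.of_norm_bounded (Real.summable_pow_div_factorial |y|) fun m => ?_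
  rw [norm_mul, norm_div, norm_pow, Real.norm_eq_abs, Real.norm_eq_abs, Real.norm_eq_abs, Nat.abs_cast]
  exact mul_le_of_le_one_left (by positivity) (ha m)

lemma egf_deriv (a : ℕ → ℝ) (ha : ∀ m, |a m| ≤ 1) (y : ℝ) :
    HasDerivAt (egf a) (egf (fun m => a (m + 1)) y) y := by
  set R := |y| + 1 with hR
  have hR0 : 0 < R := by positivity
  have key := hasDerivAt_tsum_of_isPreconnected
    (g := fun (m : ℕ) (y : ℝ) => a m * (y ^ m / (Nat.factorial m : ℝ)))
    (g' := fun (m : ℕ) (y : ℝ) => a m * ((m : ℝ) * y ^ (m - 1) / (Nat.factorial m : ℝ)))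
    (u := fun (m : ℕ) => (m : ℝ) * R ^ (m - 1) / (Nat.factorial m : ℝ))
    (t := Metric.ball (0:ℝ) R) (y₀ := 0) (y := y) ?_ Metric.isOpen_ball
    (convex_ball _ _).isPreconnected ?_ ?_ (by simpa using hR0) (egf_summable a ha 0) (by simp [hR])
  · unfold egf
    refine HasDerivAt.congr_deriv key ?_
    rw [Summable.tsum_eq_zero_add]
    · simp only [Nat.cast_zero, zero_mul, zero_div, mul_zero, zero_add]
      refine tsum_congr fun m => ?_
      rw [Nat.factorial_succ]; push_cast
      have : (Nat.factorial m : ℝ) ≠ 0 := by positivity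
      have : (m + 1 : ℝ) ≠ 0 := by positivity
      field_simp
    · rw [← summable_nat_add_iff 1]
      refine (egf_summable (fun m => a (m+1)) (fun m => ha _) y).congr fun m => ?_
      rw [Nat.factorial_succ]; push_cast
      have : (Nat.factorial m : ℝ) ≠ 0 := by positivity
      have : (m + 1 : ℝ) ≠ 0 := by positivity
      field_simp
  · rw [← summable_nat_add_iff 1]
    refine (Real.summable_pow_div_factorial R).congr fun m => ?_
    rw [Nat.factorial_succ]; push_cast
    have : (Nat.factorial m : ℝ) ≠ 0 := by positivity
    have : (m + 1 : ℝ) ≠ 0 := by positivity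
    field_simp
  · intro m x _
    exact ((hasDerivAt_pow m x).div_const _).const_mul _
  · intro m x hx
    have hx : |x| ≤ R := by simpa using (le_of_lt (by simpa using hx : |x| < R))
    rw [norm_mul, norm_div, norm_mul, norm_pow]
    simp only [Real.norm_eq_abs, Nat.abs_cast]
    refine (mul_le_of_le_one_left (by positivity) (ha m)).trans ?_
    gcongr

noncomputable def bc (m : ℕ) : ℝ := (-1) ^ m / (Nat.factorial m : ℝ)

lemma bc_le (m : ℕ) : |bc m| ≤ 1 := by
  unfold bc
  rw [abs_div, abs_pow, abs_neg, abs_one, one_pow, Nat.abs_cast]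
  rw [div_le_one (by positivity)]
  exact_mod_cast Nat.one_le_iff_ne_zero.2 (Nat.factorial_ne_zero m)

lemma bessel_eq (x : ℝ) : besselJ 0 x = egf bc (x ^ 2 / 4) := by
  unfold besselJ egf bc
  refine tsum_congr fun m => ?_
  rw [show x ^ 2 / 4 = (x/2)^2 by ring, ← pow_mul]
  simp only [add_zero]
  have : (Nat.factorial m : ℝ) ≠ 0 := by positivity
  field_simp

lemma ode (y : ℝ) : y * egf (fun m => bc (m + 1 + 1)) y + egf (fun m => bc (m + 1)) y + egf bc y = 0 := by
  have h0 := egf_summable bc bc_le y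
  have h1 := egf_summable (fun m => bc (m+1)) (fun m => bc_le _) y
  have h2 := egf_summable (fun m => bc (m+1+1)) (fun m => bc_le _) y
  have e : y * egf (fun m => bc (m + 1 + 1)) y = ∑' m : ℕ, (m : ℝ) * (bc (m+1) * (y ^ m / (Nat.factorial m : ℝ))) := by
    have h3 : ∀ m : ℕ, ((m + 1 : ℕ) : ℝ) * (bc (m+1+1) * (y ^ (m+1) / (Nat.factorial (m+1) : ℝ))) =
        y * (bc (m + 1 + 1) * (y ^ m / (Nat.factorial m : ℝ))) := fun m => by
      rw [Nat.factorial_succ]; push_cast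
      have : (Nat.factorial m : ℝ) ≠ 0 := by positivity
      have : (m + 1 : ℝ) ≠ 0 := by positivity
      field_simp
      ring
    rw [Summable.tsum_eq_zero_add, egf, ← tsum_mul_left]
    · simp only [h3]; simp
    · rw [← summable_nat_add_iff 1]
      simp only [h3]
      exact h2.mul_left y
  have e2 : egf (fun m => bc (m + 1)) y + egf bc y = ∑' m : ℕ, - ((m : ℝ) * (bc (m+1) * (y ^ m / (Nat.factorial m : ℝ)))) := by
    rw [egf, egf, ← h1.tsum_add h0]
    refine tsum_congr fun m => ?_
    have : bc m = - ((m + 1) * bc (m+1)) := by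
      unfold bc
      rw [Nat.factorial_succ, pow_succ]; push_cast
      have : (Nat.factorial m : ℝ) ≠ 0 := by positivity
      have : (m + 1 : ℝ) ≠ 0 := by positivity
      field_simp
    rw [this]; ring
  rw [add_assoc, e, e2, tsum_neg]; ring

noncomputable def wf (s : ℝ) : ℝ := egf bc (Real.exp (2 * s) / 4)
noncomputable def wd (s : ℝ) : ℝ := egf (fun m => bc (m + 1)) (Real.exp (2 * s) / 4) * (Real.exp (2 * s) / 2)

lemma y_deriv (s : ℝ) (k : ℝ) : HasDerivAt (fun s => Real.exp (2 * s) / k) (2 * Real.exp (2 * s) / k) s := by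
  have := (((hasDerivAt_id s).const_mul 2).exp).div_const k
  simpa [mul_comm] using this

lemma wf_deriv (s : ℝ) : HasDerivAt wf (wd s) s := by
  have := (egf_deriv bc bc_le (Real.exp (2 * s) / 4)).comp s (y_deriv s 4)
  unfold wf wd
  refine HasDerivAt.congr_deriv this ?_
  ring

lemma wd_deriv (s : ℝ) : HasDerivAt wd (- Real.exp (2 * s) * wf s) s := by
  have := ((egf_deriv (fun m => bc (m+1)) (fun m => bc_le _) (Real.exp (2 * s) / 4)).comp s (y_deriv s 4)).mul (y_deriv s 2)
  unfold wf
  refine HasDerivAt.congr_deriv this ?_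
  have := ode (Real.exp (2 * s) / 4)
  simp only [Function.comp]
  linear_combination (Real.exp (2 * s)) * this

lemma sturm (w w1 : ℝ → ℝ) (hw : ∀ s, HasDerivAt w (w1 s) s)
    (hw1 : ∀ s, HasDerivAt w1 (- Real.exp (2 * s) * w s) s) (α β : ℝ) (hab : α < β)
    (h0 : w α = 0) (h1 : w β = 0) (hpos : ∀ s ∈ Set.Ioo α β, 0 < w s) :
    Real.pi ≤ Real.exp β * (β - α) := by
  by_contra! H
  set M := Real.exp β with hM
  have hM0 : 0 < M := Real.exp_pos _
  have hW : ∀ s, HasDerivAt (fun s => w1 s * Real.sin (M * (s - α)) - w s * (M * Real.cos (M * (s - α))))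
      ((M ^ 2 - Real.exp (2 * s)) * (w s * Real.sin (M * (s - α)))) s := by
    intro s
    have hl : HasDerivAt (fun s => M * (s - α)) M s := by
      simpa using ((hasDerivAt_id s).sub_const α).const_mul M
    have := ((hw1 s).mul hl.sin).sub ((hw s).mul (hl.cos.const_mul M))
    refine HasDerivAt.congr_deriv this ?_
    ring
  have hsin : ∀ s, α < s → s ≤ β → 0 < Real.sin (M * (s - α)) := fun s h2 h3 => by
    apply Real.sin_pos_of_pos_of_lt_pi
    · exact mul_pos hM0 (by linarith)
    · refine lt_of_le_of_lt ?_ H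
      gcongr
  have mono := strictMonoOn_of_deriv_pos (convex_Icc α β)
    (fun s _ => (hW s).continuousAt.continuousWithinAt) (fun s hs => by
      rw [interior_Icc] at hs
      rw [(hW s).deriv]
      refine mul_pos ?_ (mul_pos (hpos s hs) (hsin s hs.1 hs.2.le))
      rw [sub_pos, hM, ← Real.exp_nat_mul]
      apply Real.exp_lt_exp.2
      push_cast
      linarith [hs.2])
  have := mono (Set.left_mem_Icc.2 hab.le) (Set.right_mem_Icc.2 hab.le) hab
  simp only [h0, h1, sub_self, mul_zero, Real.sin_zero, zero_mul, sub_zero] at this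
  have h2 : 0 < w1 β := pos_of_mul_pos_left this (hsin β hab le_rfl).le
  have h3 : Filter.Tendsto (slope w β) (nhdsWithin β (Set.Iio β)) (nhds (w1 β)) := 
    ((hasDerivAt_iff_tendsto_slope.1 (hw β)).mono_left (nhdsWithin_mono _ (fun x hx => ne_of_lt hx)))
  have h4 : w1 β ≤ 0 := by
    refine le_of_tendsto h3 ?_
    filter_upwards [Ioo_mem_nhdsLT hab] with s hs
    rw [slope_def_field, h1]
    exact div_nonpos_of_nonneg_of_nonpos (by linarith [hpos s hs]) (by linarith [hs.2])
  linarith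

lemma bessel_gap (a b : ℝ) (ha : 0 < a) (hab : a < b) (h0 : besselJ 0 a = 0) (h1 : besselJ 0 b = 0)
    (hne : ∀ x ∈ Set.Ioo a b, besselJ 0 x ≠ 0) : Real.pi ≤ b * (Real.log b - Real.log a) := by
  have hb : 0 < b := ha.trans hab
  have hwf : ∀ s, wf s = besselJ 0 (Real.exp s) := fun s => by
    rw [bessel_eq, wf, ← Real.exp_nat_mul]; norm_num
  have hl : Real.log a < Real.log b := Real.log_lt_log ha hab
  have hn : ∀ s ∈ Set.Ioo (Real.log a) (Real.log b), wf s ≠ 0 := fun s hs => by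
    rw [hwf]; apply hne
    exact ⟨(Real.log_lt_iff_lt_exp ha).1 hs.1, (Real.lt_log_iff_exp_lt hb).1 hs.2⟩
  have hwa : wf (Real.log a) = 0 := by rw [hwf, Real.exp_log ha, h0]
  have hwb : wf (Real.log b) = 0 := by rw [hwf, Real.exp_log hb, h1]
  have hcont : Continuous wf := continuous_iff_continuousAt.2 fun s => (wf_deriv s).continuousAt
  have hsign : (∀ s ∈ Set.Ioo (Real.log a) (Real.log b), 0 < wf s) ∨ (∀ s ∈ Set.Ioo (Real.log a) (Real.log b), wf s < 0) := by
    by_contra! H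
    obtain ⟨⟨s, hs, hs'⟩, ⟨t, ht, ht'⟩⟩ := H
    obtain ⟨x, hx, hx'⟩ := (isPreconnected_Ioo.image wf hcont.continuousOn).ordConnected.out (Set.mem_image_of_mem _ hs) (Set.mem_image_of_mem _ ht) ⟨hs', ht'⟩
    exact hn x hx hx'
  rw [show b = Real.exp (Real.log b) from (Real.exp_log hb).symm, Real.log_exp]
  rcases hsign with h | h
  · exact sturm wf wd wf_deriv wd_deriv _ _ hl hwa hwb h
  · refine sturm (fun s => - wf s) (fun s => - wd s) (fun s => (wf_deriv s).neg) (fun s => ?_) _ _ hl (by simp [hwa]) (by simp [hwb]) (fun s hs => by simpa using h s hs)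
    refine HasDerivAt.congr_deriv (wd_deriv s).neg ?_
    ring

lemma gap_lin (a b : ℝ) (ha : 0 < a) (hab : a < b) (h : Real.pi ≤ b * (Real.log b - Real.log a)) :
    min 1 a ≤ b - a := by
  have hb : 0 < b := ha.trans hab
  by_cases h2 : b ≤ 2 * a
  · refine (min_le_left _ _).trans ?_
    rw [← Real.log_div hb.ne' ha.ne'] at h
    have := Real.log_le_sub_one_of_pos (div_pos hb ha)
    have h3 : Real.log (b / a) ≤ (b - a) / a := by rwa [sub_div, div_self ha.ne']
    have h4 : Real.pi ≤ b * ((b - a) / a) := h.trans (by gcongr)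
    rw [mul_div_assoc', le_div_iff₀ ha] at h4
    nlinarith [Real.pi_gt_three]
  · exact (min_le_right _ _).trans (by linarith)

lemma main_sum (j : ℕ → ℝ)
    (hj_pos : ∀ k, 1 ≤ k → 0 < j k)
    (hj_mono : ∀ k l, 1 ≤ k → k < l → j k < j l)
    (hj_zero : ∀ k, 1 ≤ k → besselJ 0 (j k) = 0)
    (hj_surj : ∀ x : ℝ, 0 < x → besselJ 0 x = 0 → ∃ k, 1 ≤ k ∧ j k = x)
    (ω : ℕ → ℝ)
    (hω_inj : ∀ k l, 1 ≤ k → 1 ≤ l → ω k = ω l → k = l)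
    (hω_mem : ∀ k, 1 ≤ k → ω k ∈
      {x : ℝ | ∃ p ∈ ({1, 2, 3} : Set ℕ), ∃ n, p + 1 ≤ n ∧ x = (j n) ^ 2 - (j p) ^ 2}) :
    (∀ k, 1 ≤ k → 0 < ω k) ∧ Summable fun k => 1 / |ω (k + 1)| := by
  set c := min 1 (j 1) with hc
  have hc0 : 0 < c := lt_min one_pos (hj_pos 1 le_rfl)
  have gap : ∀ k, 1 ≤ k → c ≤ j (k+1) - j k := by
    intro k hk
    have h1 : min 1 (j k) ≤ j (k+1) - j k := by
      apply gap_lin _ _ (hj_pos k hk) (hj_mono k _ hk (by omega))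
      apply bessel_gap _ _ (hj_pos k hk) (hj_mono k _ hk (by omega)) (hj_zero k hk) (hj_zero _ (by omega))
      rintro x hx hx0
      obtain ⟨i, hi, rfl⟩ := hj_surj x ((hj_pos k hk).trans hx.1) hx0
      rcases lt_trichotomy i k with h | rfl | h
      · have := hj_mono i k hi h; linarith [hx.1]
      · exact lt_irrefl _ hx.1
      · rcases Nat.lt_or_ge (k+1) i with h' | h'
        · have := hj_mono (k+1) i (by omega) h'; linarith [hx.2]
        · obtain rfl : i = k + 1 := by omega
          exact lt_irrefl _ hx.2
    have h2 : j 1 ≤ j k := by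
      rcases Nat.eq_or_lt_of_le hk with h | h
      · rw [← h]
      · exact (hj_mono 1 k le_rfl h).le
    exact (min_le_min_left 1 h2).trans h1
  have gap2 : ∀ p d, 1 ≤ p → c * d ≤ j (p + d) - j p := by
    intro p d hp
    induction d with
    | zero => simp
    | succ d ih =>
      have := gap (p + d) (by omega)
      push_cast
      rw [← add_assoc]
      linarith
  have lower : ∀ p d, 1 ≤ p → (c * d) ^ 2 ≤ j (p + d) ^ 2 - j p ^ 2 := by
    intro p d hp
    have h1 := gap2 p d hp
    have h2 := hj_pos p hp
    have h3 : 0 ≤ c * d := by positivity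
    nlinarith
  have ch : ∀ k : ℕ, ∃ q : Fin 4 × ℕ, (1 ≤ (q.1 : ℕ)) ∧ ω (k+1) = j ((q.1:ℕ) + (q.2 + 1)) ^ 2 - j (q.1:ℕ) ^ 2 := by
    intro k
    obtain ⟨p, hp, n, hn, h⟩ := hω_mem (k+1) (by omega)
    have hp' : 1 ≤ p ∧ p < 4 := by
      simp at hp; omega
    refine ⟨(⟨p, hp'.2⟩, n - p - 1), hp'.1, ?_⟩
    rw [h]; simp only; congr 3; omega
  choose q hq1 hq2 using ch
  have low : ∀ k, (c * ((q k).2 + 1 : ℕ)) ^ 2 ≤ ω (k+1) := fun k => by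
    rw [hq2]; exact lower _ _ (hq1 k)
  have hpos : ∀ k, 0 < ω (k+1) := fun k => lt_of_lt_of_le (by positivity) (low k)
  refine ⟨fun k hk => by obtain ⟨i, rfl⟩ := Nat.exists_eq_add_of_le' hk; exact hpos i, ?_⟩
  have qinj : Function.Injective q := by
    intro k l hkl
    have := hω_inj (k+1) (l+1) (by omega) (by omega) (by rw [hq2, hq2, hkl])
    omega
  have hs : Summable fun z : Fin 4 × ℕ => 1 / (c * (z.2 + 1 : ℕ)) ^ 2 := by
    have h1 : Summable fun d : ℕ => 1 / (c * (d + 1 : ℕ)) ^ 2 := by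
      have := (summable_nat_add_iff 1).2 (Real.summable_one_div_nat_pow.2 (by norm_num : 1 < 2))
      refine (this.mul_left (1 / c^2)).congr fun d => ?_
      rw [mul_pow]; field_simp
    rw [summable_prod_of_nonneg (fun z => by positivity)]
    exact ⟨fun _ => h1, (hasSum_fintype _).summable⟩
  refine Summable.of_nonneg_of_le (fun k => by positivity) (fun k => ?_) (hs.comp_injective qinj)
  rw [abs_of_pos (hpos k)]
  exact one_div_le_one_div_of_le (by positivity) (low k)

lemma shift_sum (l : ℤ → ℝ) (hs : Summable fun n => 1 / |l n|) (hl : ∀ n, n ≠ 0 → l n ≠ 0) (m : ℤ) :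
    Summable fun n => 1 / |l n - l m| := by
  refine Summable.of_norm_bounded_eventually (hs.mul_left 2) ?_
  have h1 := hs.tendsto_cofinite_zero
  have h2 : ∀ᶠ n in Filter.cofinite, 1 / |l n| < 1 / (2 * |l m| + 1) := 
    h1.eventually (gt_mem_nhds (by positivity))
  have h3 : ∀ᶠ n : ℤ in Filter.cofinite, n ≠ 0 := by
    exact (Set.finite_singleton (0:ℤ)).compl_mem_cofinite
  filter_upwards [h2, h3] with n hn hn0
  have hp : 0 < |l n| := abs_pos.2 (hl n hn0)
  have h4 := (one_div_lt_one_div hp (by positivity)).1 hn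
  have h5 := abs_sub_abs_le_abs_sub (l n) (l m)
  have h6 := abs_nonneg (l m)
  rw [Real.norm_eq_abs, abs_of_nonneg (by positivity), mul_one_div, div_le_div_iff₀ (by linarith) hp]
  linarith


/-- With `(j_{0,k})_{k≥1}` the increasing enumeration of the positive
zeros of `J_0`, `(ω_k)_{k≥1}` the increasing enumeration of
`{j_{0,n}² - j_{0,p}² : p ∈ {1,2,3}, n ≥ p+1}`, `ω_0 := 0` and `ω_{-k} := -ω_k`, for
every `T > 0` the family `{e^{iω_n t} : n ∈ ℤ}` is minimal in `L²((0,T);ℂ)`: no member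
lies in the `L²`-closure of the span of the others, i.e. for every `m ∈ ℤ` the `L²`
distance from `e^{iω_m t}` to every finite linear combination of the other exponentials
is bounded below by a positive constant. -/
theorem stmt11 (j : ℕ → ℝ)
    (hj_pos : ∀ k, 1 ≤ k → 0 < j k)
    (hj_mono : ∀ k l, 1 ≤ k → k < l → j k < j l)
    (hj_zero : ∀ k, 1 ≤ k → besselJ 0 (j k) = 0)
    (hj_surj : ∀ x : ℝ, 0 < x → besselJ 0 x = 0 → ∃ k, 1 ≤ k ∧ j k = x)
    (ω : ℕ → ℝ)
    (hω_mono : ∀ k, 1 ≤ k → ω k < ω (k + 1))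
    (hω_mem : ∀ k, 1 ≤ k → ω k ∈
      {x : ℝ | ∃ p ∈ ({1, 2, 3} : Set ℕ), ∃ n, p + 1 ≤ n ∧ x = (j n) ^ 2 - (j p) ^ 2})
    (hω_surj : ∀ x ∈
      {x : ℝ | ∃ p ∈ ({1, 2, 3} : Set ℕ), ∃ n, p + 1 ≤ n ∧ x = (j n) ^ 2 - (j p) ^ 2},
      ∃ k, 1 ≤ k ∧ ω k = x)
    (ωZ : ℤ → ℝ)
    (hωZ_zero : ωZ 0 = 0)
    (hωZ_pos : ∀ k : ℕ, 1 ≤ k → ωZ (k : ℤ) = ω k)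
    (hωZ_neg : ∀ k : ℕ, 1 ≤ k → ωZ (-(k : ℤ)) = -ω k)
    (T : ℝ) (hT : 0 < T) :
    ∀ m : ℤ, ∃ ε : ℝ, 0 < ε ∧
      ∀ c : ℤ → ℂ, (Function.support c).Finite → c m = 0 →
        ε ≤ ∫ t in (0 : ℝ)..T,
          ‖Complex.exp (Complex.I * (ωZ m : ℂ) * (t : ℂ)) -
            ∑' n : ℤ, c n * Complex.exp (Complex.I * (ωZ n : ℂ) * (t : ℂ))‖ ^ 2 := by
  have hinj : ∀ k l, 1 ≤ k → 1 ≤ l → ω k = ω l → k = l := by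
    have hm : StrictMono fun k => ω (k + 1) := strictMono_nat_of_lt_succ fun k => hω_mono (k+1) (by omega)
    intro k l hk hl h
    obtain ⟨k, rfl⟩ := Nat.exists_eq_add_of_le' hk
    obtain ⟨l, rfl⟩ := Nat.exists_eq_add_of_le' hl
    rw [hm.injective h]
  obtain ⟨hpos, hsum⟩ := main_sum j hj_pos hj_mono hj_zero hj_surj ω hinj hω_mem
  have hs0 : Summable fun n => 1 / |ωZ n| := by
    apply Summable.of_nat_of_neg
    · rw [← summable_nat_add_iff 1]
      refine hsum.congr fun k => ?_
      rw [hωZ_pos (k+1) (by omega)]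
    · rw [← summable_nat_add_iff 1]
      refine hsum.congr fun k => ?_
      rw [hωZ_neg (k+1) (by omega), abs_neg]
  have cases3 : ∀ n : ℤ, n = 0 ∨ (∃ k : ℕ, 1 ≤ k ∧ n = k) ∨ (∃ k : ℕ, 1 ≤ k ∧ n = -k) := by
    intro n
    rcases lt_trichotomy n 0 with h | h | h
    · exact Or.inr (Or.inr ⟨n.natAbs, by omega, by omega⟩)
    · exact Or.inl h
    · exact Or.inr (Or.inl ⟨n.natAbs, by omega, by omega⟩)
  have hZinj : Function.Injective ωZ := by
    intro a b hab
    rcases cases3 a with rfl | ⟨k, hk, rfl⟩ | ⟨k, hk, rfl⟩ <;>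
    rcases cases3 b with rfl | ⟨l, hl, rfl⟩ | ⟨l, hl, rfl⟩ <;>
    (try simp only [hωZ_zero] at hab) <;>
    (try simp only [hωZ_pos _ hk, hωZ_neg _ hk] at hab) <;>
    (try simp only [hωZ_pos _ hl, hωZ_neg _ hl] at hab) <;>
    first
    | rfl
    | (have := hpos _ hk; have := hpos _ hl; exfalso; linarith)
    | (have := hpos _ hk; exfalso; linarith)
    | (have := hpos _ hl; exfalso; linarith)
    | (rw [hinj k l hk hl (by linarith)])
  intro m
  exact minimal ωZ m (shift_sum ωZ hs0 (fun n hn h => hn (hZinj (h.trans hωZ_zero.symm))) m)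
    (fun n hn h => hn (hZinj h)) T hT
end
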